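/- For every β ∈ ℝ with β ≠ −1, f_β((2+β)/(3(1+β))) = −(β²+β−1)(1+β+β²)² / (9(1+β)³). Consequently, for β ∈ (−1,1), the number (2+β)/(3(1+β)) is a root of f_β if and only if β = σ. -/

import Mathlib

/-- The cubic governing the clockwise (Shapley) periodic orbit. -/
noncomputable def fShapley (β Z : ℝ) : ℝ :=
  (3*β^2 + 3*β + 3)*Z^3 + (2*β^3 - 2*β^2 - 5*β - 4)*Z^2 + (-β^3 + 4*β + 3)*Z - (1 + β)

/-- The value of the cubic at `(2 + β) / (3 (1 + β))`. -/
theorem fShapley_apply_div {β : ℝ} (hβ : β ≠ -1) :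
    fShapley β ((2 + β)/(3*(1 + β))) =
      -((β^2 + β - 1)*(1 + β + β^2)^2) / (9*(1 + β)^3) := by
  have h : 1 + β ≠ 0 := fun h => hβ (by linarith)
  unfold fShapley
  field_simp
  ring

/-- The golden mean is the only root of `x² + x - 1` above `-1`. -/
theorem sq_add_self_sub_one_eq_zero_iff {x : ℝ} (hx : -1 < x) :
    x^2 + x - 1 = 0 ↔ x = (Real.sqrt 5 - 1)/2 := by
  have h5 : Real.sqrt 5 ^ 2 = 5 := Real.sq_sqrt (by norm_num)
  have h1 : 1 < Real.sqrt 5 := Real.lt_sqrt_of_sq_lt (by norm_num)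
  constructor
  · intro h
    have hmul : (x - (Real.sqrt 5 - 1)/2) * (x + (Real.sqrt 5 + 1)/2) = 0 := by
      linear_combination h - h5 / 4
    rcases mul_eq_zero.mp hmul with h | h <;> linarith
  · rintro rfl
    linear_combination h5 / 4

/-- for β ≠ −1, f_β((2+β)/(3(1+β))) = −(β²+β−1)(1+β+β²)²/(9(1+β)³);
hence for β ∈ (−1,1) the number (2+β)/(3(1+β)) is a root of f_β iff β = σ. -/
theorem stmt8 :
    (∀ β : ℝ, β ≠ -1 →
      fShapley β ((2 + β)/(3*(1 + β))) =
        -((β^2 + β - 1)*(1 + β + β^2)^2) / (9*(1 + β)^3)) ∧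
    (∀ β ∈ Set.Ioo (-1 : ℝ) 1,
      (fShapley β ((2 + β)/(3*(1 + β))) = 0 ↔ β = (Real.sqrt 5 - 1)/2)) := by
  refine ⟨fun β hβ => fShapley_apply_div hβ, fun β hβ => ?_⟩
  have hden : 9*(1 + β)^3 ≠ 0 := by
    have : 0 < 1 + β := by linarith [hβ.1]
    positivity
  have hsq : (1 + β + β^2)^2 ≠ 0 := pow_ne_zero 2 (by nlinarith [sq_nonneg (β + 1/2)])
  rw [fShapley_apply_div hβ.1.ne', div_eq_zero_iff, or_iff_left hden, neg_eq_zero,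
    mul_eq_zero, or_iff_left hsq, sq_add_self_sub_one_eq_zero_iff hβ.1]
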